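/- For coprime positive integers a and b, the average number of boxes over all simultaneous (a,b)-cores equals (a-1)(b-1)(a+b+1)/24; equivalently, the sum of the sizes of all (a,b)-cores equals (1/(a+b)) * binomial(a+b,b) * (a-1)(b-1)(a+b+1)/24. -/

import Mathlib

/-- The hook length of the cell `(i, j)` in a Young diagram. -/
def YoungDiagram.hookLength (μ : YoungDiagram) (i j : ℕ) : ℕ :=
  (μ.rowLen i - j) + (μ.colLen j - i) - 1

/-- A Young diagram is an `a`-core if none of its hook lengths is divisible by `a`. -/
def YoungDiagram.IsCore (μ : YoungDiagram) (a : ℕ) : Prop :=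
  ∀ i j : ℕ, (i, j) ∈ μ → ¬ a ∣ μ.hookLength i j

/-!
The first-column hook lengths of a partition form its beta set `X`, and the partition is an
`a`-core exactly when `X` is stable under subtracting `a`. For a simultaneous core the least
element `f i` of the complement of `X` in each residue class `i` modulo `a` determines `X`, and
Selmer's formulas express the size of the partition through the sum of the squared differences
`(f j - f i) ^ 2`. Following `f` along `0, b, 2 * b, …` each step raises it by `b - a * z k` with
`z k ≥ 0` and `∑ k, z k = b`. As `f` is normalised by `f 0 = 0`, which is its minimum, every weak
composition `z` of `b` into `a` parts arises exactly once from a pair consisting of a core and a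
rotation. The size becomes a rotation invariant quadratic polynomial in the partial sums of `z`
along cyclic arcs, and its average over all compositions only needs the first two factorial moments
of such a partial sum.
-/

namespace SimultaneousCores

open Finset

section Compositions

variable {ι : Type*} [DecidableEq ι] {s t : Finset ι}

theorem sum_piAntidiag_succ_mul {R : Type*} [Semiring R] {i : ι} (hi : i ∈ s) (n : ℕ)
    (φ : (ι → ℕ) → R) :
    ∑ w ∈ piAntidiag s (n + 1), (w i : R) * φ w =
      ∑ z ∈ piAntidiag s n, ((z i : R) + 1) * φ (z + Pi.single i 1) := by
  symm
  refine sum_of_injOn (· + Pi.single i 1) (add_left_injective _).injOn ?_ ?_ (by simp)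
  · intro z hz
    obtain ⟨hsum, hsupp⟩ := mem_piAntidiag.1 hz
    refine mem_piAntidiag.2 ⟨by simp [sum_add_distrib, hsum, hi], fun j hj ↦ ?_⟩
    by_cases hij : j = i
    · exact hij ▸ hi
    · exact hsupp j (by simpa [hij] using hj)
  · intro w hw hnot
    have hwi : w i = 0 := by
      by_contra hwi
      have hle : Pi.single i 1 ≤ w := fun j ↦ by
        rcases eq_or_ne j i with rfl | hj
        · simpa [Nat.one_le_iff_ne_zero] using hwi
        · simp [hj]
      refine hnot ⟨w - Pi.single i 1, ?_, tsub_add_cancel_of_le hle⟩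
      obtain ⟨hsum, hsupp⟩ := mem_piAntidiag.1 hw
      refine mem_piAntidiag.2 ⟨?_, fun j hj ↦ hsupp j fun h ↦ hj (by simp [h])⟩
      rw [← tsub_add_cancel_of_le hle] at hsum
      simpa [sum_add_distrib, hi] using hsum
    simp [hwi]

theorem sum_piAntidiag_succ_sum_mul {R : Type*} [Semiring R] (hts : t ⊆ s) (n : ℕ) (φ : ℕ → R) :
    ∑ w ∈ piAntidiag s (n + 1), ((∑ i ∈ t, w i : ℕ) : R) * φ (∑ i ∈ t, w i) =
      ∑ z ∈ piAntidiag s n, ((∑ i ∈ t, z i : ℕ) + #t : R) * φ (∑ i ∈ t, z i + 1) := by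
  simp_rw [Nat.cast_sum, sum_mul]
  rw [sum_comm, sum_congr rfl fun i hi ↦
    sum_piAntidiag_succ_mul (hts hi) n fun w ↦ φ (∑ i ∈ t, w i), sum_comm]
  refine sum_congr rfl fun z _ ↦ ?_
  rw [card_eq_sum_ones, Nat.cast_sum, ← sum_add_distrib, sum_mul]
  refine sum_congr rfl fun i hi ↦ ?_
  simp [sum_add_distrib, hi]

theorem succ_mul_card_piAntidiag_succ (s : Finset ι) (n : ℕ) :
    (n + 1) * #(piAntidiag s (n + 1)) = (n + #s) * #(piAntidiag s n) := by
  have hsum {m : ℕ} {z : ι → ℕ} (hz : z ∈ piAntidiag s m) : ∑ i ∈ s, z i = m :=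
    (mem_piAntidiag.1 hz).1
  calc (n + 1) * #(piAntidiag s (n + 1))
      = ∑ w ∈ piAntidiag s (n + 1), ∑ i ∈ s, w i := by
        rw [sum_congr rfl fun w hw ↦ hsum hw, sum_const, smul_eq_mul, mul_comm]
    _ = ∑ z ∈ piAntidiag s n, (∑ i ∈ s, z i + #s) := by
        simpa using sum_piAntidiag_succ_sum_mul (Subset.refl s) n fun _ ↦ (1 : ℕ)
    _ = (n + #s) * #(piAntidiag s n) := by
        rw [sum_congr rfl fun z hz ↦ congrArg (· + #s) (hsum hz), sum_const, smul_eq_mul, mul_comm]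

theorem add_mul_card_piAntidiag (s : Finset ι) (n : ℕ) :
    (#s + n) * #(piAntidiag s n) = #s * (#s + n).choose n := by
  induction n with
  | zero => simp
  | succ n ih =>
    refine Nat.eq_of_mul_eq_mul_left n.succ_pos ?_
    calc (n + 1) * ((#s + (n + 1)) * #(piAntidiag s (n + 1)))
        = (#s + n + 1) * ((n + 1) * #(piAntidiag s (n + 1))) := by ring
      _ = (#s + n + 1) * ((#s + n) * #(piAntidiag s n)) := by
          rw [succ_mul_card_piAntidiag_succ, add_comm n]
      _ = #s * ((#s + n + 1) * (#s + n).choose n) := by rw [ih]; ring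
      _ = (n + 1) * (#s * (#s + (n + 1)).choose (n + 1)) := by
          rw [Nat.add_one_mul_choose_eq, add_assoc]; ring

theorem add_mul_descFactorial (m k r : ℕ) :
    (m + k) * m.descFactorial r = m.descFactorial (r + 1) + (k + r) * m.descFactorial r := by
  rcases lt_or_ge m r with h | h
  · simp [Nat.descFactorial_of_lt h]
  · rw [Nat.descFactorial_succ, ← add_mul]
    congr 1
    omega

theorem sum_piAntidiag_succ_descFactorial_succ (hts : t ⊆ s) (n r : ℕ) :
    ∑ w ∈ piAntidiag s (n + 1), (∑ i ∈ t, w i).descFactorial (r + 1) =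
      ∑ z ∈ piAntidiag s n, (∑ i ∈ t, z i).descFactorial (r + 1) +
        (#t + r) * ∑ z ∈ piAntidiag s n, (∑ i ∈ t, z i).descFactorial r := by
  have hdesc (m : ℕ) : m.descFactorial (r + 1) = m * (m - 1).descFactorial r := by
    cases m with
    | zero => simp
    | succ m => rw [Nat.succ_descFactorial_succ, Nat.add_sub_cancel]
  have h := sum_piAntidiag_succ_sum_mul hts n fun m ↦ (m - 1).descFactorial r
  simpa only [Nat.cast_id, ← hdesc, Nat.add_sub_cancel, add_mul_descFactorial, sum_add_distrib,
    ← mul_sum] using h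

theorem ascFactorial_mul_sum_descFactorial (hts : t ⊆ s) (n r : ℕ) :
    (#s).ascFactorial r * ∑ z ∈ piAntidiag s n, (∑ i ∈ t, z i).descFactorial r =
      (#t).ascFactorial r * n.descFactorial r * #(piAntidiag s n) := by
  induction n generalizing r with
  | zero => cases r <;> simp
  | succ n ih =>
    cases r with
    | zero => simp
    | succ r =>
      have ih_r := ih r
      have ih_succ := ih (r + 1)
      rw [sum_piAntidiag_succ_descFactorial_succ hts, Nat.succ_descFactorial_succ]
      set M := ∑ z ∈ piAntidiag s n, (∑ i ∈ t, z i).descFactorial r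
      set M' := ∑ z ∈ piAntidiag s n, (∑ i ∈ t, z i).descFactorial (r + 1)
      calc (#s).ascFactorial (r + 1) * (M' + (#t + r) * M)
          = (#s).ascFactorial (r + 1) * M' +
              (#s + r) * (#t + r) * ((#s).ascFactorial r * M) := by
            rw [mul_add, Nat.ascFactorial_succ]; ring
        _ = (#t).ascFactorial (r + 1) *
              (n.descFactorial (r + 1) + (#s + r) * n.descFactorial r) * #(piAntidiag s n) := by
            rw [ih_r, ih_succ, Nat.ascFactorial_succ (n := #t)]; ring
        _ = (#t).ascFactorial (r + 1) * n.descFactorial r * ((n + #s) * #(piAntidiag s n)) := by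
            rw [← add_mul_descFactorial]; ring
        _ = (#t).ascFactorial (r + 1) * ((n + 1) * n.descFactorial r) *
              #(piAntidiag s (n + 1)) := by
            rw [← succ_mul_card_piAntidiag_succ]; ring

theorem sum_piAntidiag_sq_sub {R : Type*} [CommRing R] (hts : t ⊆ s) (n : ℕ) :
    (#s + 1 : R) * ∑ z ∈ piAntidiag s n, (#t * n - #s * ((∑ i ∈ t, z i : ℕ) : R)) ^ 2 =
      #t * (#s - #t) * n * (n + #s) * #(piAntidiag s n) := by
  have moment_one := congrArg (Nat.cast (R := R)) (ascFactorial_mul_sum_descFactorial hts n 1)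
  have moment_two := congrArg (Nat.cast (R := R)) (ascFactorial_mul_sum_descFactorial hts n 2)
  simp only [Nat.ascFactorial_succ, Nat.ascFactorial_zero, Nat.descFactorial_one, add_zero,
    mul_one, Nat.cast_mul, Nat.cast_add, Nat.cast_one, Nat.cast_sum (piAntidiag s n),
    Nat.cast_descFactorial_two, mul_sub, ← sq, sum_sub_distrib] at moment_one moment_two
  have hexpand : ∑ z ∈ piAntidiag s n, (#t * n - #s * ((∑ i ∈ t, z i : ℕ) : R)) ^ 2 =
      (#t * n : R) ^ 2 * #(piAntidiag s n) -
        2 * (#t * n) * #s * ∑ z ∈ piAntidiag s n, ((∑ i ∈ t, z i : ℕ) : R) +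
        (#s : R) ^ 2 * ∑ z ∈ piAntidiag s n, ((∑ i ∈ t, z i : ℕ) : R) ^ 2 := by
    simp only [sub_sq, mul_pow, sum_add_distrib, sum_sub_distrib, sum_const, ← mul_sum,
      nsmul_eq_mul]
    ring
  rw [hexpand]
  linear_combination (#s : R) * moment_two +
    ((#s : R) * (#s + 1) - 2 * #t * n * (#s + 1)) * moment_one

end Compositions

section BetaSets

theorem lt_colLen_iff_lt_rowLen (μ : YoungDiagram) (i j : ℕ) : i < μ.colLen j ↔ j < μ.rowLen i :=
  YoungDiagram.mem_iff_lt_colLen.symm.trans YoungDiagram.mem_iff_lt_rowLen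

theorem hookLength_add {μ : YoungDiagram} {i j : ℕ} (h : (i, j) ∈ μ) :
    μ.hookLength i j + i + j + 1 = μ.rowLen i + μ.colLen j := by
  have hrow := YoungDiagram.mem_iff_lt_rowLen.1 h
  have hcol := YoungDiagram.mem_iff_lt_colLen.1 h
  unfold YoungDiagram.hookLength
  omega

/-- The beta set of a Young diagram: the hook lengths of the cells in its first column. -/
def betaSet (μ : YoungDiagram) : Finset ℕ := (range (μ.colLen 0)).image (μ.hookLength · 0)

theorem hookLength_zero_add {μ : YoungDiagram} {i : ℕ} (hi : i < μ.colLen 0) :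
    μ.hookLength i 0 + i + 1 = μ.rowLen i + μ.colLen 0 :=
  hookLength_add (YoungDiagram.mem_iff_lt_colLen.2 hi)

theorem hookLength_mem_betaSet {μ : YoungDiagram} {i : ℕ} (hi : i < μ.colLen 0) :
    μ.hookLength i 0 ∈ betaSet μ :=
  mem_image_of_mem _ (mem_range.2 hi)

theorem mem_betaSet {μ : YoungDiagram} {x : ℕ} :
    x ∈ betaSet μ ↔ ∃ i < μ.colLen 0, x + i + 1 = μ.rowLen i + μ.colLen 0 := by
  simp only [betaSet, mem_image, mem_range]
  refine exists_congr fun i ↦ and_congr_right fun hi ↦ ?_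
  have := hookLength_zero_add hi
  omega

theorem strictAntiOn_hookLength_zero (μ : YoungDiagram) :
    StrictAntiOn (μ.hookLength · 0) (range (μ.colLen 0)) := by
  intro i hi j hj hij
  have hi_hook := hookLength_zero_add (mem_range.1 hi)
  have hj_hook := hookLength_zero_add (mem_range.1 hj)
  have := μ.rowLen_anti i j hij.le
  dsimp only
  omega

theorem card_betaSet (μ : YoungDiagram) : #(betaSet μ) = μ.colLen 0 := by
  rw [betaSet, card_image_of_injOn (strictAntiOn_hookLength_zero μ).injOn, card_range]

theorem zero_notMem_betaSet (μ : YoungDiagram) : 0 ∉ betaSet μ := by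
  rw [mem_betaSet]
  rintro ⟨i, hi, h⟩
  have := (lt_colLen_iff_lt_rowLen μ i 0).1 hi
  omega

theorem card_filter_lt_hookLength_zero {μ : YoungDiagram} {i : ℕ} (hi : i < μ.colLen 0) :
    #{x ∈ betaSet μ | μ.hookLength i 0 < x} = i := by
  have hanti := strictAntiOn_hookLength_zero μ
  have hfilter : {k ∈ range (μ.colLen 0) | μ.hookLength i 0 < μ.hookLength k 0} = range i := by
    ext k
    simp only [mem_filter, mem_range]
    refine ⟨fun ⟨hk, hlt⟩ ↦ ?_, fun hk ↦ ?_⟩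
    · exact (hanti.lt_iff_gt (mem_coe.2 <| mem_range.2 hi) (mem_coe.2 <| mem_range.2 hk)).1 hlt
    · have hk' := hk.trans hi
      exact ⟨hk', hanti (mem_coe.2 <| mem_range.2 hk') (mem_coe.2 <| mem_range.2 hi) hk⟩
  rw [betaSet, filter_image, hfilter, card_image_of_injOn, card_range]
  exact hanti.injOn.mono (coe_subset.2 <| range_subset_range.2 hi.le)

theorem betaSet_injective : Function.Injective betaSet := by
  intro μ ν h
  have hcol : μ.colLen 0 = ν.colLen 0 := by rw [← card_betaSet, h, card_betaSet]
  have hrow (i : ℕ) (hi : i < μ.colLen 0) : μ.rowLen i = ν.rowLen i := by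
    obtain ⟨k, hk, hki⟩ := mem_image.1 (h ▸ hookLength_mem_betaSet hi : _ ∈ betaSet ν)
    rw [mem_range] at hk
    obtain rfl : k = i := by
      rw [← card_filter_lt_hookLength_zero hi, ← card_filter_lt_hookLength_zero hk, h, hki]
    have hμ := hookLength_zero_add hi
    have hν := hookLength_zero_add hk
    omega
  ext ⟨i, j⟩
  simp only [YoungDiagram.mem_cells, YoungDiagram.mem_iff_lt_rowLen]
  by_cases hi : i < μ.colLen 0
  · rw [hrow i hi]
  · have hμ := lt_colLen_iff_lt_rowLen μ i 0
    have hν := lt_colLen_iff_lt_rowLen ν i 0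
    omega

theorem notMem_betaSet {μ : YoungDiagram} {y : ℕ} :
    y ∉ betaSet μ ↔ ∃ j, y + μ.colLen j = j + μ.colLen 0 := by
  have hsymm := lt_colLen_iff_lt_rowLen μ
  constructor
  · intro hy
    have hcol : μ.rowLen (μ.colLen 0) + μ.colLen 0 ≤ y + μ.colLen 0 := by
      have := hsymm (μ.colLen 0) 0
      omega
    have hex : ∃ i, μ.rowLen i + μ.colLen 0 ≤ y + i := ⟨_, hcol⟩
    let i := Nat.find hex
    have hi : μ.rowLen i + μ.colLen 0 ≤ y + i := Nat.find_spec hex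
    refine ⟨y + i - μ.colLen 0, ?_⟩
    suffices μ.colLen (y + i - μ.colLen 0) = i by omega
    refine le_antisymm ?_ (le_of_forall_lt fun k hk ↦ ?_)
    · have := hsymm i (y + i - μ.colLen 0)
      omega
    · have hlast : y + (i - 1) < μ.rowLen (i - 1) + μ.colLen 0 :=
        not_le.1 (Nat.find_min hex (by omega : i - 1 < i))
      have hle : i ≤ μ.colLen 0 := Nat.find_min' hex hcol
      have hne : y + (i - 1) + 1 ≠ μ.rowLen (i - 1) + μ.colLen 0 := fun h ↦
        hy (mem_betaSet.2 ⟨i - 1, by omega, h⟩)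
      have := μ.rowLen_anti k (i - 1) (by omega)
      rw [hsymm]
      omega
  · rintro ⟨j, hj⟩ hy
    obtain ⟨i, -, hi⟩ := mem_betaSet.1 hy
    have := hsymm i j
    omega

/-- Stability of a set of naturals under subtracting `a` (as long as the result is a natural). -/
def SubStable (X : Finset ℕ) (a : ℕ) : Prop := ∀ x, x + a ∈ X → x ∈ X

theorem SubStable.of_add_mul {X : Finset ℕ} {a : ℕ} (hX : SubStable X a) {x : ℕ} (k : ℕ)
    (h : x + a * k ∈ X) : x ∈ X := by
  induction k with
  | zero => simpa using h
  | succ k ih => exact ih (hX _ (by rwa [add_assoc, ← Nat.mul_succ]))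

theorem isCore_iff_subStable_betaSet (μ : YoungDiagram) (a : ℕ) :
    μ.IsCore a ↔ SubStable (betaSet μ) a := by
  constructor
  · intro hcore x hx
    by_contra hnot
    obtain ⟨j, hj⟩ := notMem_betaSet.1 hnot
    obtain ⟨i, -, hi⟩ := mem_betaSet.1 hx
    have hmem : (i, j) ∈ μ := by
      have := lt_colLen_iff_lt_rowLen μ i j
      rw [YoungDiagram.mem_iff_lt_rowLen]
      by_contra hle
      omega
    have hhook : μ.hookLength i j = a := by
      have := hookLength_add hmem
      omega
    exact hcore i j hmem hhook.symm.dvd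
  · rintro hstable i j hmem ⟨k, hk⟩
    have hhook := hookLength_add hmem
    have hcol := YoungDiagram.mem_iff_lt_colLen.1 hmem
    have hle : μ.colLen j ≤ μ.colLen 0 := μ.colLen_anti 0 j j.zero_le
    have hgap : j + μ.colLen 0 - μ.colLen j ∉ betaSet μ := notMem_betaSet.2 ⟨j, by omega⟩
    exact hgap (hstable.of_add_mul k (mem_betaSet.2 ⟨i, by omega, by omega⟩))

theorem card_eq_sum_rowLen (μ : YoungDiagram) : μ.card = ∑ i ∈ range (μ.colLen 0), μ.rowLen i := by
  simp only [YoungDiagram.card, YoungDiagram.rowLen_eq_card, YoungDiagram.row]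
  refine card_eq_sum_card_fiberwise fun c hc ↦ ?_
  have := YoungDiagram.mem_iff_lt_colLen.1 (YoungDiagram.mem_cells (μ := μ) c |>.1 hc)
  exact mem_coe.2 (mem_range.2 (this.trans_le (μ.colLen_anti 0 c.2 (Nat.zero_le _))))

theorem card_add_choose_two (μ : YoungDiagram) :
    μ.card + (#(betaSet μ)).choose 2 = ∑ x ∈ betaSet μ, x := by
  rw [card_betaSet, Nat.choose_two_right, ← sum_range_id, ← sum_range_reflect, card_eq_sum_rowLen,
    ← sum_add_distrib, betaSet, sum_image (strictAntiOn_hookLength_zero μ).injOn]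
  refine sum_congr rfl fun i hi ↦ ?_
  have := hookLength_zero_add (mem_range.1 hi)
  have := mem_range.1 hi
  omega

theorem exists_rowLen_eq {f : ℕ → ℕ} (hf : Antitone f) {n : ℕ} (hn : f n = 0) :
    ∃ μ : YoungDiagram, ∀ i, μ.rowLen i = f i := by
  let μ : YoungDiagram :=
    { cells := {c ∈ range n ×ˢ range (f 0) | c.2 < f c.1}
      isLowerSet := by
        rintro ⟨i, j⟩ ⟨i', j'⟩ hle hc
        obtain ⟨hi, hj⟩ := Prod.mk_le_mk.1 hle
        have := hf hi
        simp only [coe_filter, mem_product, mem_range, Set.mem_ofPred_eq] at hc ⊢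
        omega }
  have hmem (i j : ℕ) : (i, j) ∈ μ ↔ j < f i := by
    refine (YoungDiagram.mem_mk ..).trans ?_
    simp only [mem_filter, mem_product, mem_range, and_iff_right_iff_imp]
    intro hj
    refine ⟨?_, hj.trans_le (hf i.zero_le)⟩
    by_contra! hi
    have := hf hi
    omega
  exact ⟨μ, fun i ↦ eq_of_forall_lt_iff fun j ↦
    YoungDiagram.mem_iff_lt_rowLen.symm.trans (hmem i j)⟩

theorem card_filter_lt_add_card_filter_gt {X : Finset ℕ} {x : ℕ} (hx : x ∈ X) :
    #{z ∈ X | z < x} + #{z ∈ X | x < z} + 1 = #X := by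
  have hnot : {z ∈ X | ¬ z < x} = insert x {z ∈ X | x < z} := by
    ext z
    simp only [mem_filter, mem_insert]
    grind
  rw [← card_filter_add_card_filter_not (s := X) (· < x), hnot, card_insert_of_notMem (by simp),
    add_assoc]

/-- The number of gaps of `X` with more than `i` elements of `X` above them: the length of row `i`
of the diagram with beta set `X`. -/
def gapCount (X : Finset ℕ) (i : ℕ) : ℕ :=
  #{y ∈ range (X.sup id) | y ∉ X ∧ i < #{x ∈ X | y < x}}

theorem gapCount_antitone (X : Finset ℕ) : Antitone (gapCount X) := fun _ _ hij ↦
  card_le_card <| monotone_filter_right _ fun _ _ hy ↦ ⟨hy.1, hij.trans_lt hy.2⟩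

theorem gapCount_pos_iff {X : Finset ℕ} (hX : 0 ∉ X) {i : ℕ} : 0 < gapCount X i ↔ i < #X := by
  rw [gapCount, card_pos]
  constructor
  · rintro ⟨y, hy⟩
    exact (mem_filter.1 hy).2.2.trans_le (card_filter_le _ _)
  · intro hi
    have hpos {x : ℕ} (hx : x ∈ X) : 0 < x := Nat.pos_of_ne_zero fun h ↦ hX (h ▸ hx)
    obtain ⟨x, hx⟩ := card_pos.1 (i.zero_le.trans_lt hi)
    refine ⟨0, mem_filter.2 ⟨?_, hX, ?_⟩⟩
    · exact mem_range.2 ((hpos hx).trans_le (le_sup (f := id) hx))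
    · rwa [filter_true_of_mem fun x hx ↦ hpos hx]

theorem gapCount_card_filter_lt {X : Finset ℕ} {x : ℕ} (hx : x ∈ X) :
    gapCount X #{z ∈ X | x < z} + #X = x + #{z ∈ X | x < z} + 1 := by
  have hgap (y : ℕ) : #{z ∈ X | x < z} < #{z ∈ X | y < z} ↔ y < x := by
    constructor
    · intro h
      by_contra! hxy
      exact h.not_ge (card_le_card (monotone_filter_right _ fun z _ hz ↦ hxy.trans_lt hz))
    · intro hyx
      refine card_lt_card ((ssubset_iff_of_subset ?_).2 ⟨x, by simp [hx, hyx], by simp⟩)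
      exact monotone_filter_right _ fun z _ hz ↦ hyx.trans hz
  have hcount : gapCount X #{z ∈ X | x < z} = #(range x \ {z ∈ X | z < x}) := by
    refine congrArg card (ext fun y ↦ ?_)
    have hsup : x ≤ X.sup id := le_sup (f := id) hx
    simp only [mem_filter, mem_sdiff, mem_range]
    constructor
    · rintro ⟨-, hy, hlt⟩
      exact ⟨(hgap y).1 hlt, fun h ↦ hy h.1⟩
    · rintro ⟨hlt, hy⟩
      exact ⟨hlt.trans_le hsup, fun h ↦ hy ⟨h, hlt⟩, (hgap y).2 hlt⟩
  have hsub : {z ∈ X | z < x} ⊆ range x := fun z hz ↦ mem_range.2 (mem_filter.1 hz).2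
  have hle := card_le_card hsub
  rw [card_range] at hle
  rw [hcount, card_sdiff_of_subset hsub, card_range, ← card_filter_lt_add_card_filter_gt hx]
  omega

theorem exists_betaSet_eq {X : Finset ℕ} (hX : 0 ∉ X) : ∃ μ, betaSet μ = X := by
  have hzero : gapCount X #X = 0 := by
    simpa using (gapCount_pos_iff hX (i := #X)).not.2 (lt_irrefl _)
  obtain ⟨μ, hμ⟩ := exists_rowLen_eq (gapCount_antitone X) hzero
  have hcol : μ.colLen 0 = #X := eq_of_forall_lt_iff fun i ↦ by
    rw [lt_colLen_iff_lt_rowLen, hμ, gapCount_pos_iff hX]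
  refine ⟨μ, (eq_of_subset_of_card_le (fun x hx ↦ mem_betaSet.2 ?_) ?_).symm⟩
  · refine ⟨#{z ∈ X | x < z}, ?_, ?_⟩
    · have := card_filter_lt_add_card_filter_gt hx
      omega
    · rw [hμ, hcol, gapCount_card_filter_lt hx]
  · rw [card_betaSet, hcol]

theorem betaSet_bijOn (a b : ℕ) :
    Set.BijOn betaSet {μ | μ.IsCore a ∧ μ.IsCore b}
      {X | 0 ∉ X ∧ SubStable X a ∧ SubStable X b} := by
  refine ⟨fun μ hμ ↦ ⟨zero_notMem_betaSet μ, ?_⟩, betaSet_injective.injOn, ?_⟩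
  · exact hμ.imp (isCore_iff_subStable_betaSet μ a).1 (isCore_iff_subStable_betaSet μ b).1
  · rintro X ⟨hX, ha, hb⟩
    obtain ⟨μ, rfl⟩ := exists_betaSet_eq hX
    exact ⟨μ, ⟨(isCore_iff_subStable_betaSet μ a).2 ha, (isCore_iff_subStable_betaSet μ b).2 hb⟩,
      rfl⟩

end BetaSets

section AperyFunctions

variable {a b : ℕ} {f : ZMod a → ℕ}

/-- A function giving, for each residue class modulo `a`, the least element of that class outside a
set `X` with `0 ∉ X` that is stable under subtracting `a` and `b`. -/
structure IsApery (a b : ℕ) (f : ZMod a → ℕ) : Prop where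
  zero : f 0 = 0
  cast (i : ZMod a) : (f i : ZMod a) = i
  add_le (i : ZMod a) : f (i + b) ≤ f i + b

variable [NeZero a]

/-- The set whose complement has `f i` as its least element in each residue class `i`; the bound in
`range` only serves to make it a `Finset`. -/
def gapSet (f : ZMod a → ℕ) : Finset ℕ := {x ∈ range (∑ i, f i) | x < f x}

theorem mem_gapSet {x : ℕ} : x ∈ gapSet f ↔ x < f x := by
  simp only [gapSet, mem_filter, mem_range, and_iff_right_iff_imp]
  exact fun h ↦ h.trans_le (single_le_sum (fun _ _ ↦ Nat.zero_le _) (mem_univ _))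

theorem subStable_gapSet (f : ZMod a → ℕ) : SubStable (gapSet f) a := by
  intro x hx
  rw [mem_gapSet, Nat.cast_add, ZMod.natCast_self, add_zero] at hx
  exact mem_gapSet.2 (by omega)

theorem IsApery.subStable_gapSet (hf : IsApery a b f) : SubStable (gapSet f) b := by
  intro x hx
  rw [mem_gapSet, Nat.cast_add] at hx
  have := hf.add_le x
  exact mem_gapSet.2 (by omega)

theorem gapSet_injOn : Set.InjOn gapSet {f : ZMod a → ℕ | ∀ i, (f i : ZMod a) = i} := by
  have hle {f g : ZMod a → ℕ} (hf : ∀ i, (f i : ZMod a) = i) (h : gapSet f = gapSet g) : g ≤ f := by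
    intro i
    have hnot : f i ∉ gapSet f := by rw [mem_gapSet, hf]; exact lt_irrefl _
    rw [h, mem_gapSet, hf] at hnot
    exact not_lt.1 hnot
  exact fun f hf g hg h ↦ le_antisymm (hle hg h.symm) (hle hf h)

theorem exists_isApery_gapSet_eq {X : Finset ℕ} (hzero : 0 ∉ X) (ha : SubStable X a)
    (hb : SubStable X b) : ∃ f, IsApery a b f ∧ gapSet f = X := by
  have hex (i : ZMod a) : ∃ n : ℕ, (n : ZMod a) = i ∧ n ∉ X := by
    obtain ⟨N, hN⟩ := X.exists_nat_subset_range
    refine ⟨i.val + a * N, by simp, fun h ↦ ?_⟩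
    have hlt := mem_range.1 (hN h)
    have hle := Nat.le_mul_of_pos_left N (NeZero.pos a)
    omega
  let f (i : ZMod a) : ℕ := sInf {n : ℕ | (n : ZMod a) = i ∧ n ∉ X}
  have hf (i : ZMod a) : (f i : ZMod a) = i ∧ f i ∉ X := Nat.sInf_mem (hex i)
  have hmin {n : ℕ} (hn : n ∉ X) : f n ≤ n := Nat.sInf_le ⟨rfl, hn⟩
  refine ⟨f, ⟨?_, fun i ↦ (hf i).1, fun i ↦ ?_⟩, ext fun x ↦ ?_⟩
  · simpa using hmin hzero
  · simpa [(hf i).1] using hmin fun h ↦ (hf i).2 (hb _ h)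
  · rw [mem_gapSet]
    refine ⟨fun hlt ↦ ?_, fun hx ↦ ?_⟩
    · by_contra hx
      exact hlt.not_ge (hmin hx)
    · by_contra! hle
      obtain ⟨k, hk⟩ := (Nat.modEq_iff_dvd' hle).1 ((ZMod.natCast_eq_natCast_iff _ _ _).1 (hf x).1)
      exact (hf x).2 (ha.of_add_mul k (by rwa [← hk, Nat.add_sub_cancel' hle]))

theorem gapSet_bijOn (a b : ℕ) [NeZero a] :
    Set.BijOn gapSet {f | IsApery a b f} {X | 0 ∉ X ∧ SubStable X a ∧ SubStable X b} := by
  refine ⟨fun f hf ↦ ⟨?_, subStable_gapSet f, hf.subStable_gapSet⟩,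
    gapSet_injOn.mono fun f hf ↦ hf.cast, ?_⟩
  · simp [mem_gapSet, hf.zero]
  · rintro X ⟨hzero, ha, hb⟩
    exact exists_isApery_gapSet_eq hzero ha hb

end AperyFunctions

section Selmer

variable {a : ℕ} {f : ZMod a → ℕ}

theorem val_add_mul_div (hf : ∀ i, (f i : ZMod a) = i) (i : ZMod a) :
    i.val + a * (f i / a) = f i := by
  conv_lhs => rw [← hf i, ZMod.val_natCast, hf, Nat.mod_add_div]

variable [NeZero a]

theorem sum_zmod_val {M : Type*} [AddCommMonoid M] (φ : ℕ → M) :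
    ∑ i : ZMod a, φ i.val = ∑ k ∈ range a, φ k := by
  obtain ⟨n, rfl⟩ := Nat.exists_eq_succ_of_ne_zero (NeZero.ne a)
  exact Fin.sum_univ_eq_sum_range φ (n + 1)

theorem sum_gapSet {M : Type*} [AddCommMonoid M] (hf : ∀ i, (f i : ZMod a) = i) (φ : ℕ → M) :
    ∑ x ∈ gapSet f, φ x = ∑ i, ∑ t ∈ range (f i / a), φ (i.val + a * t) := by
  rw [← sum_fiberwise (gapSet f) (fun x : ℕ ↦ (x : ZMod a))]
  refine sum_congr rfl fun i _ ↦ ?_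
  have hmem (t : ℕ) : i.val + a * t ∈ gapSet f ↔ t < f i / a := by
    rw [mem_gapSet, Nat.cast_add, Nat.cast_mul, ZMod.natCast_self, zero_mul, add_zero,
      ZMod.natCast_zmod_val, ← val_add_mul_div hf i, add_lt_add_iff_left,
      Nat.mul_lt_mul_left (NeZero.pos a), val_add_mul_div hf]
  symm
  refine sum_nbij (fun t ↦ i.val + a * t) (fun t ht ↦ ?_) (fun t _ u _ h ↦ ?_) (fun x hx ↦ ?_)
    fun _ _ ↦ rfl
  · exact mem_filter.2 ⟨(hmem t).2 (mem_range.1 ht), by simp⟩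
  · exact Nat.eq_of_mul_eq_mul_left (NeZero.pos a) (Nat.add_left_cancel h)
  · obtain ⟨hx, rfl⟩ := mem_filter.1 hx
    have hdiv : (x : ZMod a).val + a * (x / a) = x := by rw [ZMod.val_natCast, Nat.mod_add_div]
    exact ⟨x / a, mem_coe.2 (mem_range.2 ((hmem _).1 (by rwa [hdiv]))), hdiv⟩

theorem sum_range_cast (n : ℕ) : ∑ k ∈ range n, (k : ℚ) = n * (n - 1) / 2 := by
  rw [← Nat.cast_sum, sum_range_id, ← Nat.choose_two_right, Nat.cast_choose_two]

theorem sum_range_cast_sq (n : ℕ) :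
    ∑ k ∈ range n, (k : ℚ) ^ 2 = n * (n - 1) * (2 * n - 1) / 6 := by
  induction n with
  | zero => simp
  | succ n ih => rw [sum_range_succ, ih]; push_cast; ring

theorem cast_div_eq (hf : ∀ i, (f i : ZMod a) = i) (i : ZMod a) :
    ((f i / a : ℕ) : ℚ) = (f i - i.val) / a := by
  have ha : (a : ℚ) ≠ 0 := NeZero.ne _
  have hdiv : (i.val + a * (f i / a : ℕ) : ℚ) = f i := mod_cast val_add_mul_div hf i
  rw [← hdiv]
  field_simp
  ring

theorem card_gapSet (hf : ∀ i, (f i : ZMod a) = i) :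
    (#(gapSet f) : ℚ) = (∑ i, (f i : ℚ)) / a - (a - 1) / 2 := by
  have ha : (a : ℚ) ≠ 0 := NeZero.ne _
  rw [card_eq_sum_ones, sum_gapSet hf]
  simp only [sum_const, card_range, smul_eq_mul, mul_one, Nat.cast_sum, cast_div_eq hf]
  rw [← sum_div, sum_sub_distrib, sum_zmod_val (fun k ↦ (k : ℚ)), sum_range_cast]
  field_simp

theorem sum_cast_gapSet (hf : ∀ i, (f i : ZMod a) = i) :
    ∑ x ∈ gapSet f, (x : ℚ) =
      (∑ i, (f i : ℚ) ^ 2) / (2 * a) - (∑ i, (f i : ℚ)) / 2 + (a ^ 2 - 1) / 12 := by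
  have ha : (a : ℚ) ≠ 0 := NeZero.ne _
  have hclass (i : ZMod a) : ∑ t ∈ range (f i / a), ((i.val + a * t : ℕ) : ℚ) =
      (f i : ℚ) ^ 2 / (2 * a) - (f i : ℚ) / 2 - (i.val : ℚ) ^ 2 / (2 * a) + (i.val : ℚ) / 2 := by
    push_cast
    rw [sum_add_distrib, ← mul_sum, sum_range_cast, sum_const, nsmul_eq_mul, card_range,
      cast_div_eq hf]
    field_simp
    ring
  simp only [sum_gapSet hf, hclass, sum_add_distrib, sum_sub_distrib, ← sum_div]
  rw [sum_zmod_val (fun k ↦ (k : ℚ)), sum_zmod_val (fun k ↦ (k : ℚ) ^ 2), sum_range_cast,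
    sum_range_cast_sq]
  field_simp
  ring

/-- The size of the partition with beta set `X`. -/
def partitionSize (X : Finset ℕ) : ℚ := ∑ x ∈ X, (x : ℚ) - (#X).choose 2

theorem partitionSize_betaSet (μ : YoungDiagram) : partitionSize (betaSet μ) = μ.card := by
  rw [partitionSize, ← Nat.cast_sum, ← card_add_choose_two, Nat.cast_add, add_sub_cancel_right]

theorem partitionSize_gapSet (hf : ∀ i, (f i : ZMod a) = i) :
    partitionSize (gapSet f) =
      (∑ i, ∑ j, ((f j : ℚ) - f i) ^ 2) / (4 * a ^ 2) - (a ^ 2 - 1) / 24 := by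
  have ha : (a : ℚ) ≠ 0 := NeZero.ne _
  have hexpand : ∑ i, ∑ j, ((f j : ℚ) - f i) ^ 2 =
      2 * a * ∑ i, (f i : ℚ) ^ 2 - 2 * (∑ i, (f i : ℚ)) ^ 2 := by
    simp only [sub_sq, sum_add_distrib, sum_sub_distrib, ← sum_mul, ← mul_sum, sum_const, card_univ,
      ZMod.card, nsmul_eq_mul]
    ring
  rw [partitionSize, Nat.cast_choose_two, card_gapSet hf, sum_cast_gapSet hf, hexpand]
  field_simp
  ring

end Selmer

section CyclicCompositions

variable {a b : ℕ} {f g : ZMod a → ℕ}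

theorem exists_primitive {G : Type*} [AddCommGroup G] [NeZero a] {d : ZMod a → G}
    (hd : ∑ k, d k = 0) : ∃ h : ZMod a → G, h 0 = 0 ∧ ∀ k, h (k + 1) = h k + d k := by
  have htotal : ∑ j ∈ range a, d j = 0 := by
    rw [← sum_zmod_val fun j ↦ d j, ← hd]
    simp only [ZMod.natCast_zmod_val]
  refine ⟨fun k ↦ ∑ j ∈ range k.val, d j, by simp, fun k ↦ ?_⟩
  have hsucc : ∑ j ∈ range (k.val + 1), d j = ∑ j ∈ range k.val, d j + d k := by
    rw [sum_range_succ, ZMod.natCast_zmod_val]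
  have hk : k + 1 = ((k.val + 1 : ℕ) : ZMod a) := by rw [Nat.cast_succ, ZMod.natCast_zmod_val]
  have hle : k.val + 1 ≤ a := k.val_lt
  rw [← hsucc, hk]
  dsimp only
  rcases hle.lt_or_eq with hlt | heq
  · rw [ZMod.val_natCast_of_lt hlt]
  · rw [heq, htotal, ZMod.natCast_self, ZMod.val_zero, sum_range_zero]

/-- The composition of `b` recording, in units of `a`, by how much each step of the cyclic walk
`0, b, 2b, …` on residues modulo `a` fails to raise the value of an Apéry function by `b`. -/
def stepComposition (b : ℕ) (f : ZMod a → ℕ) (k : ZMod a) : ℕ :=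
  (f (k * b) + b - f (k * b + b)) / a

theorem IsApery.add_mul_stepComposition (hf : IsApery a b f) (k : ZMod a) :
    f (k * b + b) + a * stepComposition b f k = f (k * b) + b := by
  have hle := hf.add_le (k * b)
  have hdvd : a ∣ f (k * b) + b - f (k * b + b) := by
    rw [← ZMod.natCast_eq_zero_iff, Nat.cast_sub hle, Nat.cast_add, hf.cast, hf.cast, sub_self]
  rw [stepComposition, Nat.mul_div_cancel' hdvd, Nat.add_sub_cancel' hle]

theorem IsApery.add_mul_sum_stepComposition (hf : IsApery a b f) (k : ZMod a) (m : ℕ) :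
    f ((k + m) * b) + a * ∑ j ∈ range m, stepComposition b f (k + j) = f (k * b) + m * b := by
  induction m with
  | zero => simp
  | succ m ih =>
    have hstep := hf.add_mul_stepComposition (k + m)
    rw [sum_range_succ, Nat.cast_succ, ← add_assoc, add_one_mul (k + m : ZMod a)]
    linarith

theorem IsApery.stepComposition_mem_piAntidiag [NeZero a] (hf : IsApery a b f) :
    stepComposition b f ∈ piAntidiag univ b := by
  refine mem_piAntidiag.2 ⟨Nat.eq_of_mul_eq_mul_left (NeZero.pos a) ?_, fun _ _ ↦ mem_univ _⟩
  have htotal := sum_congr rfl fun k (_ : k ∈ univ) ↦ hf.add_mul_stepComposition k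
  have hshift : ∑ k : ZMod a, f (k * b + b) = ∑ k : ZMod a, f (k * b) := by
    simp only [← add_one_mul]
    exact Equiv.sum_comp (Equiv.addRight 1) fun k : ZMod a ↦ f (k * b)
  simpa [sum_add_distrib, hshift, ← mul_sum] using htotal

theorem rotate_mem_piAntidiag [NeZero a] {z : ZMod a → ℕ} (hz : z ∈ piAntidiag univ b)
    (r : ZMod a) : (fun k ↦ z (k + r)) ∈ piAntidiag univ b := by
  rw [mem_piAntidiag] at hz ⊢
  exact ⟨(Equiv.sum_comp (Equiv.addRight r) z).trans hz.1, fun _ _ ↦ mem_univ _⟩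

theorem IsApery.eq_of_rotate_stepComposition_eq [NeZero a] (hab : a.Coprime b)
    (hf : IsApery a b f) (hg : IsApery a b g) {r s : ZMod a}
    (h : ∀ k, stepComposition b f (k + r) = stepComposition b g (k + s)) : f = g ∧ r = s := by
  have hunit : (b : ZMod a) * (b : ZMod a)⁻¹ = 1 := ZMod.coe_mul_inv_eq_one b hab.symm
  have hdiff (k : ZMod a) : f ((r + k) * b) + g (s * b) = g ((s + k) * b) + f (r * b) := by
    have hf_walk := hf.add_mul_sum_stepComposition r k.val
    have hg_walk := hg.add_mul_sum_stepComposition s k.val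
    simp only [add_comm r, add_comm s, h, ZMod.natCast_zmod_val] at hf_walk hg_walk ⊢
    omega
  -- Each of `f` and `g` vanishes at `0`, which is its minimum, so the two base values agree.
  have hbase : f (r * b) = g (s * b) := by
    have hr := hdiff (-r)
    have hs := hdiff (-s)
    simp only [add_neg_cancel, zero_mul, hf.zero, hg.zero] at hr hs
    omega
  have hrs : r = s := by
    have hcast := congrArg (Nat.cast (R := ZMod a)) hbase
    rw [hf.cast, hg.cast] at hcast
    simpa [mul_assoc, hunit] using congrArg (· * (b : ZMod a)⁻¹) hcast
  subst hrs
  refine ⟨funext fun i ↦ ?_, rfl⟩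
  have hi := hdiff (i * (b : ZMod a)⁻¹ - r)
  rw [add_sub_cancel, mul_assoc, mul_comm _⁻¹, hunit, mul_one, hbase] at hi
  exact Nat.add_right_cancel hi

theorem exists_isApery_stepComposition_eq [NeZero a] (hab : a.Coprime b) {z : ZMod a → ℕ}
    (hz : ∑ k, z k = b) :
    ∃ f r, IsApery a b f ∧ ∀ k, stepComposition b f k = z (k + r) := by
  have hunit : (b : ZMod a) * (b : ZMod a)⁻¹ = 1 := ZMod.coe_mul_inv_eq_one b hab.symm
  have htotal : ∑ k, (b - a * z k : ℤ) = 0 := by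
    rw [sum_sub_distrib, ← mul_sum, ← Nat.cast_sum univ z, hz]
    simp
  obtain ⟨h, hzero, hstep⟩ := exists_primitive htotal
  have hcast (k : ZMod a) : (h k : ZMod a) = k * b := by
    rw [← ZMod.natCast_zmod_val k]
    induction k.val with
    | zero => simp [hzero]
    | succ n ih => simp [hstep, ih, add_one_mul]
  obtain ⟨r, hr⟩ := Finite.exists_min h
  let f (i : ZMod a) : ℕ := (h (i * (b : ZMod a)⁻¹ + r) - h r).toNat
  have hf (i : ZMod a) : (f i : ℤ) = h (i * (b : ZMod a)⁻¹ + r) - h r :=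
    Int.toNat_of_nonneg (sub_nonneg.2 (hr _))
  have hf_step (i : ZMod a) : (f (i + b) + a * z (i * (b : ZMod a)⁻¹ + r) : ℤ) = f i + b := by
    rw [hf, hf, add_mul, hunit, add_right_comm, hstep]
    ring
  have hapery : IsApery a b f := by
    refine ⟨by simp [f], fun i ↦ ?_, fun i ↦ ?_⟩
    · have hmod := congrArg (Int.cast (R := ZMod a)) (hf i)
      rw [Int.cast_natCast, Int.cast_sub, hcast, hcast] at hmod
      rw [hmod, add_mul, add_sub_cancel_right, mul_assoc, mul_comm _⁻¹, hunit, mul_one]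
    · have := hf_step i
      norm_cast at this
      omega
  refine ⟨f, r, hapery, fun k ↦ Nat.eq_of_mul_eq_mul_left (NeZero.pos a) ?_⟩
  have hk := hf_step (k * b)
  rw [mul_assoc, hunit, mul_one] at hk
  norm_cast at hk
  have := hapery.add_mul_stepComposition k
  omega

end CyclicCompositions

section CompositionSize

variable {a b : ℕ} [NeZero a]

/-- The size of a partition in terms of a rotation of the step composition of its Apéry function;
the sum runs over the squared differences between values of that function. -/
def compositionSize (b : ℕ) (z : ZMod a → ℕ) : ℚ :=
  (∑ k : ZMod a, ∑ m ∈ range a, ((m * b : ℚ) - a * (∑ j ∈ range m, z (k + j) : ℕ)) ^ 2) /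
    (4 * a ^ 2) - (a ^ 2 - 1) / 24

theorem compositionSize_rotate (z : ZMod a → ℕ) (r : ZMod a) :
    compositionSize b (fun k ↦ z (k + r)) = compositionSize b z := by
  simp only [compositionSize, add_right_comm _ _ r]
  congr 2
  exact Equiv.sum_comp (Equiv.addRight r) fun k ↦
    ∑ m ∈ range a, ((m * b : ℚ) - a * (∑ j ∈ range m, z (k + j) : ℕ)) ^ 2

theorem IsApery.compositionSize_stepComposition (hab : a.Coprime b) {f : ZMod a → ℕ}
    (hf : IsApery a b f) :
    compositionSize b (stepComposition b f) = partitionSize (gapSet f) := by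
  have hwalk (k : ZMod a) (m : ℕ) :
      (m * b : ℚ) - a * (∑ j ∈ range m, stepComposition b f (k + j) : ℕ) =
        f ((k + m) * b) - f (k * b) := by
    have := congrArg (Nat.cast (R := ℚ)) (hf.add_mul_sum_stepComposition k m)
    push_cast at this ⊢
    linarith
  have hmul (φ : ZMod a → ℚ) : ∑ k, φ (k * b) = ∑ i, φ i :=
    Equiv.sum_comp (Units.mulRight (ZMod.unitOfCoprime b hab.symm)) φ
  have hadd (k : ZMod a) (φ : ZMod a → ℚ) : ∑ m ∈ range a, φ (k + m) = ∑ l, φ l := by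
    rw [← sum_zmod_val fun m ↦ φ (k + m), ← Equiv.sum_comp (Equiv.addLeft k) φ]
    simp only [ZMod.natCast_zmod_val, Equiv.coe_addLeft]
  rw [compositionSize, partitionSize_gapSet hf.cast,
    ← hmul fun i ↦ ∑ j, ((f j : ℚ) - f i) ^ 2]
  congr 2
  refine sum_congr rfl fun k _ ↦ ?_
  simp only [hwalk]
  exact (hadd k fun l ↦ ((f (l * b) : ℚ) - f (k * b)) ^ 2).trans
    (hmul fun j ↦ ((f j : ℚ) - f (k * b)) ^ 2)

theorem finite_setOf_isApery (hab : a.Coprime b) : {f | IsApery a b f}.Finite := by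
  refine Set.Finite.of_injOn (f := stepComposition b) (fun f hf ↦ ?_) (fun f hf g hg h ↦ ?_)
    (piAntidiag univ b).finite_toSet
  · exact hf.stepComposition_mem_piAntidiag
  · exact (IsApery.eq_of_rotate_stepComposition_eq hab hf hg (r := 0) (s := 0) (by simp [h])).1

theorem mul_finsum_partitionSize_gapSet (hab : a.Coprime b) :
    a * ∑ᶠ f ∈ {f : ZMod a → ℕ | IsApery a b f}, partitionSize (gapSet f) =
      ∑ z ∈ piAntidiag (univ : Finset (ZMod a)) b, compositionSize b z := by
  have hfin := finite_setOf_isApery hab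
  calc (a : ℚ) * ∑ᶠ f ∈ {f : ZMod a → ℕ | IsApery a b f}, partitionSize (gapSet f)
      = ∑ p ∈ hfin.toFinset ×ˢ (univ : Finset (ZMod a)), partitionSize (gapSet p.1) := by
        rw [finsum_mem_eq_finite_toFinset_sum _ hfin, sum_product, mul_sum]
        simp
    _ = _ := by
        refine sum_bij (fun p _ k ↦ stepComposition b p.1 (k + p.2)) (fun p hp ↦ ?_)
          (fun p hp q hq h ↦ ?_) (fun z hz ↦ ?_) (fun p hp ↦ ?_)
        all_goals simp only [mem_product, Set.Finite.mem_toFinset, Set.mem_ofPred_eq] at *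
        · exact rotate_mem_piAntidiag hp.1.stepComposition_mem_piAntidiag _
        · exact Prod.ext_iff.2
            (IsApery.eq_of_rotate_stepComposition_eq hab hp.1 hq.1 (congrFun h))
        · obtain ⟨f, r, hf, hfz⟩ := exists_isApery_stepComposition_eq hab (mem_piAntidiag.1 hz).1
          exact ⟨(f, -r), ⟨hf, mem_univ _⟩, funext fun k ↦ by simp [hfz]⟩
        · rw [compositionSize_rotate, hp.1.compositionSize_stepComposition hab]

theorem sum_sq_mul_sub_walk (k : ZMod a) {m : ℕ} (hm : m ≤ a) :
    ∑ z ∈ piAntidiag (univ : Finset (ZMod a)) b,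
        ((m * b : ℚ) - a * (∑ j ∈ range m, z (k + j) : ℕ)) ^ 2 =
      m * (a - m) * (b * (a + b) / (a + 1) * #(piAntidiag (univ : Finset (ZMod a)) b)) := by
  have hinj : Set.InjOn (fun j : ℕ ↦ k + (j : ZMod a)) (range m) := fun i hi j hj hij ↦ by
    rw [coe_range, Set.mem_Iio] at hi hj
    exact Nat.ModEq.eq_of_lt_of_lt ((ZMod.natCast_eq_natCast_iff _ _ _).1 (add_left_cancel hij))
      (hi.trans_le hm) (hj.trans_le hm)
  have harc := sum_piAntidiag_sq_sub (R := ℚ)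
    (subset_univ ((range m).image fun j : ℕ ↦ k + (j : ZMod a))) b
  simp only [sum_image hinj, card_image_of_injOn hinj, card_range, card_univ, ZMod.card] at harc
  field_simp
  linear_combination harc

theorem sum_compositionSize (a b : ℕ) [NeZero a] :
    ∑ z ∈ piAntidiag (univ : Finset (ZMod a)) b, compositionSize b z =
      (a - 1) * (b - 1) * (a + b + 1) / 24 * #(piAntidiag (univ : Finset (ZMod a)) b) := by
  have ha : (a : ℚ) ≠ 0 := NeZero.ne _
  have hsum : ∑ m ∈ range a, (m * (a - m) : ℚ) = a * (a ^ 2 - 1) / 6 := by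
    simp only [mul_sub, ← sq, sum_sub_distrib, ← sum_mul, sum_range_cast, sum_range_cast_sq]
    ring
  have harc (k : ZMod a) : ∑ z ∈ piAntidiag (univ : Finset (ZMod a)) b, ∑ m ∈ range a,
      ((m * b : ℚ) - a * (∑ j ∈ range m, z (k + j) : ℕ)) ^ 2 =
        a * (a ^ 2 - 1) / 6 *
          (b * (a + b) / (a + 1) * #(piAntidiag (univ : Finset (ZMod a)) b)) := by
    rw [sum_comm, sum_congr rfl fun m hm ↦ sum_sq_mul_sub_walk k (mem_range.1 hm).le, ← sum_mul,
      hsum]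
  simp only [compositionSize, sum_sub_distrib, ← sum_div]
  rw [sum_comm, sum_congr rfl fun k _ ↦ harc k]
  simp only [sum_const, card_univ, ZMod.card, nsmul_eq_mul]
  field_simp
  ring

end CompositionSize

end SimultaneousCores

/-- Armstrong's conjecture (Johnson's theorem): the sum of sizes of all `(a,b)`-cores equals
the number of `(a,b)`-cores times `(a-1)(b-1)(a+b+1)/24`. -/
theorem expected_size_simultaneous_cores (a b : ℕ) (ha : 0 < a) (hb : 0 < b)
    (hab : Nat.Coprime a b) :
    ∑ᶠ μ ∈ {μ : YoungDiagram | μ.IsCore a ∧ μ.IsCore b}, (μ.card : ℚ)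
      = (1 / ((a : ℚ) + b)) * ((a + b).choose b : ℚ) *
        (((a : ℚ) - 1) * ((b : ℚ) - 1) * ((a : ℚ) + b + 1) / 24) := by
  have : NeZero a := ⟨ha.ne'⟩
  have ha_ne : (a : ℚ) ≠ 0 := NeZero.ne _
  have hcount : ((Finset.piAntidiag (Finset.univ : Finset (ZMod a)) b).card : ℚ) =
      a * (1 / ((a : ℚ) + b) * (a + b).choose b) := by
    have h := SimultaneousCores.add_mul_card_piAntidiag (Finset.univ : Finset (ZMod a)) b
    rw [Finset.card_univ, ZMod.card, mul_comm] at h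
    field_simp
    exact_mod_cast h
  rw [finsum_mem_eq_of_bijOn _ (SimultaneousCores.betaSet_bijOn a b)
      fun μ _ ↦ (SimultaneousCores.partitionSize_betaSet μ).symm,
    ← finsum_mem_eq_of_bijOn _ (SimultaneousCores.gapSet_bijOn a b) fun f _ ↦ rfl]
  refine mul_left_cancel₀ ha_ne ?_
  rw [SimultaneousCores.mul_finsum_partitionSize_gapSet hab, SimultaneousCores.sum_compositionSize,
    hcount]
  ring
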